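/- arXiv:0910.5339 — 7 statements merged into one kernel-verified Lean document; each statement's English description precedes it below -/
import Mathlib

section
/- For real numbers λ₁, λ₂ ≥ 0, there exists x > 0 such that x − (x+λ₁)(x+λ₂) > 0 if and only if √λ₁ + √λ₂ < 1. -/
/-- For real numbers λ₁, λ₂ ≥ 0, there exists x > 0 such that
x − (x+λ₁)(x+λ₂) > 0 if and only if √λ₁ + √λ₂ < 1. -/
theorem stmt_0 (l1 l2 : ℝ) (h1 : 0 ≤ l1) (h2 : 0 ≤ l2) :
    (∃ x : ℝ, 0 < x ∧ x - (x + l1) * (x + l2) > 0) ↔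
      Real.sqrt l1 + Real.sqrt l2 < 1 := by
  obtain ⟨a, ha, rfl⟩ : ∃ a : ℝ, 0 ≤ a ∧ a ^ 2 = l1 := ⟨√l1, Real.sqrt_nonneg _, Real.sq_sqrt h1⟩
  obtain ⟨b, hb, rfl⟩ : ∃ b : ℝ, 0 ≤ b ∧ b ^ 2 = l2 := ⟨√l2, Real.sqrt_nonneg _, Real.sq_sqrt h2⟩
  rw [Real.sqrt_sq ha, Real.sqrt_sq hb]
  have hab : 0 ≤ a * b := mul_nonneg ha hb
  constructor
  · rintro ⟨x, hx, h⟩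
    -- Completing the square: (x + a²)(x + b²) = (x - ab)² + x (a + b)².
    have hpos : 0 < x * (1 - (a + b) ^ 2) := by
      linear_combination h + sq_nonneg (x - a * b)
    have hlt : 0 < 1 - (a + b) ^ 2 := pos_of_mul_pos_right hpos hx.le
    nlinarith
  · intro h
    have hsq : (a + b) ^ 2 < 1 := by nlinarith
    -- The vertex of the parabola, where the value is x² - (ab)²; and (a + b)² < 1 says x > ab.
    obtain ⟨x, hxdef⟩ : ∃ x : ℝ, x = (1 - a ^ 2 - b ^ 2) / 2 := ⟨_, rfl⟩
    have hx : a * b < x := by rw [hxdef]; linarith [add_sq a b]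
    have hval : x - (x + a ^ 2) * (x + b ^ 2) = x ^ 2 - (a * b) ^ 2 := by rw [hxdef]; ring
    refine ⟨x, hab.trans_lt hx, ?_⟩
    rw [hval]
    exact sub_pos.mpr (pow_lt_pow_left₀ hx hab two_ne_zero)
end

section
/- Let λ₁, λ₂ ≥ 0. If there exist q₁, q₂ ∈ [0,1] such that λ₁ < q₁(1−q₂) and λ₂ < q₂(1−q₁), then √λ₁ + √λ₂ < 1. -/
/-- If there exist q₁, q₂ ∈ [0,1] with λ₁ < q₁(1−q₂) and λ₂ < q₂(1−q₁),
then √λ₁ + √λ₂ < 1. -/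
theorem stmt_2 (l1 l2 : ℝ) (h1 : 0 ≤ l1) (h2 : 0 ≤ l2)
    (h : ∃ q1 ∈ Set.Icc (0:ℝ) 1, ∃ q2 ∈ Set.Icc (0:ℝ) 1,
      l1 < q1 * (1 - q2) ∧ l2 < q2 * (1 - q1)) :
    Real.sqrt l1 + Real.sqrt l2 < 1 := by
  -- AM-GM bounds each root by a mean, and the two means add up to `1`.
  have amgm : ∀ a b l : ℝ, 0 ≤ a → 0 ≤ b → 0 ≤ l → l < a * b → √l < (a + b) / 2 := by
    intro a b l ha hb hl hlt
    refine lt_of_pow_lt_pow_left₀ 2 (by positivity) ?_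
    rw [Real.sq_sqrt hl]
    nlinarith [sq_nonneg (a - b)]
  obtain ⟨q1, ⟨hq1, hq1'⟩, q2, ⟨hq2, hq2'⟩, hl1, hl2⟩ := h
  have key1 := amgm q1 (1 - q2) l1 hq1 (by linarith) h1 hl1
  have key2 := amgm q2 (1 - q1) l2 hq2 (by linarith) h2 hl2
  linarith
end

section
/- Let λ₁, λ₂ ≥ 0 with √λ₁ + √λ₂ < 1. Then there exist q₁, q₂ ∈ (0,1) such that λ₁ < q₁(1−q₂) and λ₂ < q₂(1−q₁). -/
/-- If λ₁, λ₂ ≥ 0 and √λ₁ + √λ₂ < 1, then there exist q₁, q₂ ∈ (0,1) with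
λ₁ < q₁(1−q₂) and λ₂ < q₂(1−q₁). -/
theorem stmt_3 (l1 l2 : ℝ) (h1 : 0 ≤ l1) (h2 : 0 ≤ l2)
    (h : Real.sqrt l1 + Real.sqrt l2 < 1) :
    ∃ q1 ∈ Set.Ioo (0:ℝ) 1, ∃ q2 ∈ Set.Ioo (0:ℝ) 1,
      l1 < q1 * (1 - q2) ∧ l2 < q2 * (1 - q1) := by
  have ha := Real.sqrt_nonneg l1
  have hb := Real.sqrt_nonneg l2
  have ha2 := Real.sq_sqrt h1
  have hb2 := Real.sq_sqrt h2
  set a := Real.sqrt l1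
  set b := Real.sqrt l2
  -- Splitting the slack `1 - a - b` equally gives `q1 > a`, `q2 > b` with `q1 + q2 = 1`,
  -- so that the two products are `q1 ^ 2` and `q2 ^ 2`.
  refine ⟨(1 + a - b) / 2, ⟨by linarith, by linarith⟩,
    (1 - a + b) / 2, ⟨by linarith, by linarith⟩, ?_, ?_⟩
  · nlinarith
  · nlinarith
end

section
/- Let λ₁, λ₂ ≥ 0 and ρ₁, ρ₂ ∈ (0,1] satisfy √λ₁ + √λ₂ < 1, λ₁ < ρ₁, and λ₂ < ρ₂. Then there exist q₁, q₂ ∈ [0,1] such that λ₁ < q₁(1−q₂) ≤ ρ₁ and λ₂ < q₂(1−q₁) ≤ ρ₂. -/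
/-!
The product pair `(q₁(1-q₂), q₂(1-q₁))` attains every `(a², b²)` with `a, b ≥ 0` and `a + b ≤ 1`
(`exists_probs_of_add_le_one`). Indeed the two equations force `q₁ - q₂ = a² - b²`, so that `q₁` is
a root of `x² - (1 + a² - b²) x + a²`, whose discriminant `((1-a)² - b²) ((1+a)² - b²)` is
nonnegative because `a + b ≤ 1`. It then suffices to pick `a` slightly above `√λ₁` and `b`
slightly above `√λ₂`, with `a ≤ √ρ₁`, `b ≤ √ρ₂` and `a + b ≤ 1`.
-/

/-- Every point under the curve `√x + √y = 1` is a throughput pair of two-user slotted ALOHA. -/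
theorem exists_probs_of_add_le_one (a b : ℝ) (ha : 0 ≤ a) (hb : 0 ≤ b) (hab : a + b ≤ 1) :
    ∃ q1 ∈ Set.Icc (0:ℝ) 1, ∃ q2 ∈ Set.Icc (0:ℝ) 1,
      q1 * (1 - q2) = a ^ 2 ∧ q2 * (1 - q1) = b ^ 2 := by
  have ha2 : a ^ 2 ≤ 1 := by nlinarith
  have hb2 : b ^ 2 ≤ 1 := by nlinarith
  have hD : 0 ≤ ((1 - a) ^ 2 - b ^ 2) * ((1 + a) ^ 2 - b ^ 2) :=
    mul_nonneg (by nlinarith) (by nlinarith)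
  obtain ⟨s, hs, hs2⟩ : ∃ s : ℝ, 0 ≤ s ∧ s ^ 2 = ((1 - a) ^ 2 - b ^ 2) * ((1 + a) ^ 2 - b ^ 2) :=
    ⟨_, Real.sqrt_nonneg _, Real.sq_sqrt hD⟩
  have hs1 : s ≤ 1 + a ^ 2 - b ^ 2 :=
    abs_le_of_sq_le_sq' (by nlinarith [sq_nonneg a]) (by nlinarith) |>.2
  have hs3 : s ≤ 1 + b ^ 2 - a ^ 2 :=
    abs_le_of_sq_le_sq' (by nlinarith [sq_nonneg b]) (by nlinarith) |>.2
  -- The smaller root of the quadratic, and its counterpart with `a` and `b` exchanged.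
  refine ⟨(1 + a ^ 2 - b ^ 2 - s) / 2, ⟨by linarith, by nlinarith⟩,
    (1 + b ^ 2 - a ^ 2 - s) / 2, ⟨by linarith, by nlinarith⟩, ?_, ?_⟩
  · linear_combination (-1 / 4) * hs2
  · linear_combination (-1 / 4) * hs2

/-- Under √λ₁ + √λ₂ < 1, λ₁ < ρ₁ and λ₂ < ρ₂, the secrecy-stability region
is nonempty: there exist q₁, q₂ ∈ [0,1] with λ₁ < q₁(1−q₂) ≤ ρ₁ and
λ₂ < q₂(1−q₁) ≤ ρ₂. -/
theorem stmt_4 (l1 l2 r1 r2 : ℝ) (h1 : 0 ≤ l1) (h2 : 0 ≤ l2)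
    (hr1 : r1 ∈ Set.Ioc (0:ℝ) 1) (hr2 : r2 ∈ Set.Ioc (0:ℝ) 1)
    (hsum : Real.sqrt l1 + Real.sqrt l2 < 1)
    (hlr1 : l1 < r1) (hlr2 : l2 < r2) :
    ∃ q1 ∈ Set.Icc (0:ℝ) 1, ∃ q2 ∈ Set.Icc (0:ℝ) 1,
      (l1 < q1 * (1 - q2) ∧ q1 * (1 - q2) ≤ r1) ∧
      (l2 < q2 * (1 - q1) ∧ q2 * (1 - q1) ≤ r2) := by
  set e := (1 - (Real.sqrt l1 + Real.sqrt l2)) / 2 with he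
  have hepos : 0 < e := by linarith
  have hx := Real.sqrt_nonneg l1
  have hy := Real.sqrt_nonneg l2
  -- Half of the slack in `√λ₁ + √λ₂ < 1` goes to each coordinate.
  set a := min (Real.sqrt r1) (Real.sqrt l1 + e)
  set b := min (Real.sqrt r2) (Real.sqrt l2 + e)
  have ha : Real.sqrt l1 < a := lt_min (Real.sqrt_lt_sqrt h1 hlr1) (by linarith)
  have hb : Real.sqrt l2 < b := lt_min (Real.sqrt_lt_sqrt h2 hlr2) (by linarith)
  have ha' : a ≤ Real.sqrt l1 + e := min_le_right _ _
  have hb' : b ≤ Real.sqrt l2 + e := min_le_right _ _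
  have har : a ≤ Real.sqrt r1 := min_le_left _ _
  have hbr : b ≤ Real.sqrt r2 := min_le_left _ _
  have ha0 : 0 ≤ a := by linarith
  have hb0 : 0 ≤ b := by linarith
  obtain ⟨q1, hq1, q2, hq2, e1, e2⟩ :=
    exists_probs_of_add_le_one a b ha0 hb0 (by linarith)
  refine ⟨q1, hq1, q2, hq2, ?_, ?_⟩
  · rw [e1]
    exact ⟨Real.lt_sq_of_sqrt_lt ha, (Real.le_sqrt ha0 hr1.1.le).1 har⟩
  · rw [e2]
    exact ⟨Real.lt_sq_of_sqrt_lt hb, (Real.le_sqrt hb0 hr2.1.le).1 hbr⟩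
end

section
/- Let ρ₁, ρ₂ ≥ 0 with √ρ₁ + √ρ₂ ≤ 1. Then there exist q₁, q₂ ∈ [0,1] such that q₁(1−q₂) = ρ₁ and q₂(1−q₁) = ρ₂. -/
/-!
Subtracting the two equations gives `q1 - q2 = r1 - r2`, so `q1` is a root of
`q² - (1 + r1 - r2) q + r1` and `q2` of the same polynomial with the roles of `r1`, `r2` exchanged.
Both have discriminant `D = (1 + r1 - r2)² - 4 r1`. With `a = √r1` and `b = √r2` it factors as
`((1 - a)² - b²) ((1 + a)² - b²)`, which is nonnegative when `a + b ≤ 1`.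
Taking the smaller root of each quadratic gives a solution in the unit square.
-/

/-- If ρ₁, ρ₂ ≥ 0 and √ρ₁ + √ρ₂ ≤ 1, then there exist q₁, q₂ ∈ [0,1] with
q₁(1−q₂) = ρ₁ and q₂(1−q₁) = ρ₂. -/
theorem stmt_5 (r1 r2 : ℝ) (h1 : 0 ≤ r1) (h2 : 0 ≤ r2)
    (h : Real.sqrt r1 + Real.sqrt r2 ≤ 1) :
    ∃ q1 ∈ Set.Icc (0:ℝ) 1, ∃ q2 ∈ Set.Icc (0:ℝ) 1,
      q1 * (1 - q2) = r1 ∧ q2 * (1 - q1) = r2 := by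
  have ha := Real.sqrt_nonneg r1
  have hb := Real.sqrt_nonneg r2
  have ha2 := Real.sq_sqrt h1
  have hb2 := Real.sq_sqrt h2
  have hr1 : r1 ≤ 1 := by nlinarith
  have hr2 : r2 ≤ 1 := by nlinarith
  have hD : 0 ≤ (1 + r1 - r2) ^ 2 - 4 * r1 := by
    have e1 : 0 ≤ (1 - √r1) ^ 2 - √r2 ^ 2 := by nlinarith
    have e2 : 0 ≤ (1 + √r1) ^ 2 - √r2 ^ 2 := by nlinarith
    have e3 : (1 + r1 - r2) ^ 2 - 4 * r1
        = ((1 - √r1) ^ 2 - √r2 ^ 2) * ((1 + √r1) ^ 2 - √r2 ^ 2) := by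
      rw [hb2]
      linear_combination (-(√r1 ^ 2 + r1) + 2 * (1 + r2)) * ha2
    rw [e3]
    exact mul_nonneg e1 e2
  obtain ⟨s, hs, hsD⟩ : ∃ s : ℝ, 0 ≤ s ∧ s ^ 2 = (1 + r1 - r2) ^ 2 - 4 * r1 :=
    ⟨_, Real.sqrt_nonneg _, Real.sq_sqrt hD⟩
  have s1 : s ≤ 1 + r1 - r2 := abs_le_of_sq_le_sq' (by linarith) (by linarith) |>.2
  -- `D` is symmetric: it also equals `(1 + r2 - r1)² - 4 r2`.
  have s2 : s ≤ 1 + r2 - r1 := abs_le_of_sq_le_sq' (by nlinarith) (by linarith) |>.2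
  refine ⟨(1 + r1 - r2 - s) / 2, ⟨by linarith, by linarith⟩,
    (1 + r2 - r1 - s) / 2, ⟨by linarith, by linarith⟩, ?_, ?_⟩
  · linear_combination (-1 / 4) * hsD
  · linear_combination (-1 / 4) * hsD
end

section
/- Let ρ₁, ρ₂ ∈ [0,1] with √ρ₁ + √ρ₂ ≤ 1, and set D = (1+ρ₁−ρ₂)² − 4ρ₁. Then D ≥ 0, and the pair q₁ = (1+ρ₁−ρ₂−√D)/2, q₂ = (1−ρ₁+ρ₂−√D)/2 satisfies q₁, q₂ ∈ [0,1], q₁(1−q₂) = ρ₁, and q₂(1−q₁) = ρ₂. -/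
/-!
With a = √r1 and b = √r2, the discriminant factors as
D = (1 - a - b)(1 - a + b)(1 + a - b)(1 + a + b), so a + b ≤ 1 gives D ≥ 0. Since
D = (1 + r1 - r2)² - 4 r1 = (1 - r1 + r2)² - 4 r2, the root √D is at most 1 + r1 - r2 and
1 - r1 + r2, which gives q1, q2 ≥ 0; the upper bounds follow from |r1 - r2| ≤ 1. The two
equations are differences of squares, e.g. q1 (1 - q2) = ((1 + r1 - r2)² - D) / 4 = r1.
-/

/-- Explicit solution of the secrecy-boundary equations: for ρ₁, ρ₂ ∈ [0,1] with
√ρ₁ + √ρ₂ ≤ 1 and D = (1+ρ₁−ρ₂)² − 4ρ₁, we have D ≥ 0 and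
q₁ = (1+ρ₁−ρ₂−√D)/2, q₂ = (1−ρ₁+ρ₂−√D)/2 lie in [0,1] and satisfy
q₁(1−q₂) = ρ₁, q₂(1−q₁) = ρ₂. -/
theorem stmt_6 (r1 r2 D q1 q2 : ℝ)
    (hr1 : r1 ∈ Set.Icc (0:ℝ) 1) (hr2 : r2 ∈ Set.Icc (0:ℝ) 1)
    (h : Real.sqrt r1 + Real.sqrt r2 ≤ 1)
    (hD : D = (1 + r1 - r2) ^ 2 - 4 * r1)
    (hq1 : q1 = (1 + r1 - r2 - Real.sqrt D) / 2)
    (hq2 : q2 = (1 - r1 + r2 - Real.sqrt D) / 2) :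
    0 ≤ D ∧ q1 ∈ Set.Icc (0:ℝ) 1 ∧ q2 ∈ Set.Icc (0:ℝ) 1 ∧
      q1 * (1 - q2) = r1 ∧ q2 * (1 - q1) = r2 := by
  obtain ⟨h10, h11⟩ := hr1
  obtain ⟨h20, h21⟩ := hr2
  have hD0 : 0 ≤ D := by
    have ha := Real.sqrt_nonneg r1
    have hb := Real.sqrt_nonneg r2
    have ha2 := Real.sq_sqrt h10
    have hb2 := Real.sq_sqrt h20
    -- With a = √r1 and b = √r2, D splits into linear factors, all nonnegative when a + b ≤ 1.
    have hfac : D = ((1 - √r1 - √r2) * (1 - √r1 + √r2)) *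
        ((1 + √r1 - √r2) * (1 + √r1 + √r2)) := by
      rw [hD]
      conv_lhs => rw [← ha2, ← hb2]
      ring
    rw [hfac]
    refine mul_nonneg (mul_nonneg ?_ ?_) (mul_nonneg ?_ ?_) <;> linarith
  have hs := Real.sqrt_nonneg D
  have hs2 := Real.sq_sqrt hD0
  have hle1 : √D ≤ 1 + r1 - r2 := Real.sqrt_le_iff.mpr ⟨by linarith, by linarith⟩
  -- D is symmetric in r1 and r2: it also equals (1 - r1 + r2)² - 4 r2.
  have hle2 : √D ≤ 1 - r1 + r2 := Real.sqrt_le_iff.mpr ⟨by linarith, by nlinarith⟩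
  subst hq1 hq2
  refine ⟨hD0, ⟨by linarith, by linarith⟩, ⟨by linarith, by linarith⟩, ?_, ?_⟩
  · linear_combination (-1 / 4) * hs2 - (1 / 4) * hD
  · linear_combination (-1 / 4) * hs2 - (1 / 4) * hD
end

section
/- Let a, b ∈ [0,1], λ₁, λ₂ ≥ 0, ρ₁, ρ₂ ∈ (0,1] with λ₁ < ρ₁, λ₂ < ρ₂, √ρ₁ + √ρ₂ ≥ 1, √ρ₁ + √λ₂ < 1, and √ρ₂ + √λ₁ < 1, and let K = {(q₁,q₂) ∈ [0,1]² : λ₁ < q₁(1−q₂) ≤ ρ₁ and λ₂ < q₂(1−q₁) ≤ ρ₂}. Then the points P₁ = (√ρ₁, 1−√ρ₁) and P₂ = (1−√ρ₂, √ρ₂) both belong to K, and for every (q₁,q₂) ∈ K, S(q₁,q₂) = a·q₁(1−q₂) + b·q₂(1−q₁) ≤ max(S(P₁), S(P₂)) = max(a·ρ₁ + b·(1−√ρ₁)², a·(1−√ρ₂)² + b·ρ₂). -/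
/-!
Put `x = √(q₁(1-q₂))` and `y = √(q₂(1-q₁))`. By AM-GM, `x ≤ (q₁+1-q₂)/2` and `y ≤ (q₂+1-q₁)/2`,
so `x + y ≤ 1`, while the secrecy constraints read `x ≤ √ρ₁`, `y ≤ √ρ₂`. The throughput is
`a x² + b y²`, nondecreasing in `x` and `y`, so its maximum lies on the segment `x + y = 1`,
`1 - √ρ₂ ≤ x ≤ √ρ₁`. There it is the convex function `a x² + b (1-x)²`, which is maximal at an
endpoint; the endpoints are the values at `P₂` and `P₁`.
-/

/-- A convex quadratic on an interval `[u, s]` is bounded by its larger endpoint value. -/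
lemma quad_le_max {a b u s x : ℝ} (ha : 0 ≤ a) (hb : 0 ≤ b) (hu : u ≤ x) (hs : x ≤ s) :
    a * x ^ 2 + b * (1 - x) ^ 2 ≤
      max (a * s ^ 2 + b * (1 - s) ^ 2) (a * u ^ 2 + b * (1 - u) ^ 2) := by
  -- `(a + b) * (x + s) - 2 * b` is the slope of the chord from `x` to `s`.
  rcases le_total 0 ((a + b) * (x + s) - 2 * b) with h | h
  · refine le_max_of_le_left ?_
    nlinarith [mul_nonneg h (sub_nonneg.2 hs)]
  · refine le_max_of_le_right ?_
    have h' : (a + b) * (x + u) - 2 * b ≤ 0 := by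
      nlinarith [mul_nonneg (add_nonneg ha hb) (sub_nonneg.2 (hu.trans hs))]
    nlinarith [mul_nonneg (neg_nonneg.2 h') (sub_nonneg.2 hu)]

/-- The optimization problem in the coordinates `x`, `y` (square roots of the success rates). -/
lemma sq_sum_le_max {a b s t x y : ℝ} (ha : 0 ≤ a) (hb : 0 ≤ b) (hx : 0 ≤ x) (hy : 0 ≤ y)
    (hxs : x ≤ s) (hyt : y ≤ t) (hxy : x + y ≤ 1) :
    a * x ^ 2 + b * y ^ 2 ≤
      max (a * s ^ 2 + b * (1 - s) ^ 2) (a * (1 - t) ^ 2 + b * t ^ 2) := by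
  rcases le_total x (1 - t) with h | h
  · refine le_max_of_le_right ?_
    gcongr
  · have hq := quad_le_max ha hb h hxs
    rw [sub_sub_cancel] at hq
    refine le_trans ?_ hq
    have : y ≤ 1 - x := by linarith
    gcongr

lemma sqrt_mul_one_sub_le {p q : ℝ} (hp : 0 ≤ p) (hq : q ≤ 1) :
    √(p * (1 - q)) ≤ (p + (1 - q)) / 2 := by
  apply Real.sqrt_le_iff.2 ⟨by linarith, ?_⟩
  nlinarith [sq_nonneg (p - (1 - q))]

/-- Case (2) of Theorem 2: under the stated conditions, P₁ = (√ρ₁, 1−√ρ₁) and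
P₂ = (1−√ρ₂, √ρ₂) lie in the secrecy-stability region K, and the throughput on
K is bounded by max(S(P₁), S(P₂)) = max(a·ρ₁ + b·(1−√ρ₁)², a·(1−√ρ₂)² + b·ρ₂). -/
theorem stmt_9 (a b l1 l2 r1 r2 : ℝ)
    (ha : a ∈ Set.Icc (0:ℝ) 1) (hb : b ∈ Set.Icc (0:ℝ) 1)
    (h1 : 0 ≤ l1) (h2 : 0 ≤ l2)
    (hr1 : r1 ∈ Set.Ioc (0:ℝ) 1) (hr2 : r2 ∈ Set.Ioc (0:ℝ) 1)
    (hlr1 : l1 < r1) (hlr2 : l2 < r2)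
    (hsum : 1 ≤ Real.sqrt r1 + Real.sqrt r2)
    (hc1 : Real.sqrt r1 + Real.sqrt l2 < 1)
    (hc2 : Real.sqrt r2 + Real.sqrt l1 < 1)
    (K : Set (ℝ × ℝ))
    (hK : K = {p : ℝ × ℝ | p.1 ∈ Set.Icc (0:ℝ) 1 ∧ p.2 ∈ Set.Icc (0:ℝ) 1 ∧
      (l1 < p.1 * (1 - p.2) ∧ p.1 * (1 - p.2) ≤ r1) ∧
      (l2 < p.2 * (1 - p.1) ∧ p.2 * (1 - p.1) ≤ r2)})
    (S : ℝ × ℝ → ℝ)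
    (hS : S = fun p => a * (p.1 * (1 - p.2)) + b * (p.2 * (1 - p.1)))
    (P1 P2 : ℝ × ℝ)
    (hP1 : P1 = (Real.sqrt r1, 1 - Real.sqrt r1))
    (hP2 : P2 = (1 - Real.sqrt r2, Real.sqrt r2)) :
    P1 ∈ K ∧ P2 ∈ K ∧ (∀ p ∈ K, S p ≤ max (S P1) (S P2)) ∧
      max (S P1) (S P2) =
        max (a * r1 + b * (1 - Real.sqrt r1) ^ 2)
            (a * (1 - Real.sqrt r2) ^ 2 + b * r2) := by
  obtain ⟨ha0, -⟩ := ha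
  obtain ⟨hb0, -⟩ := hb
  have es : √r1 ^ 2 = r1 := Real.sq_sqrt hr1.1.le
  have et : √r2 ^ 2 = r2 := Real.sq_sqrt hr2.1.le
  have el1 : √l1 ^ 2 = l1 := Real.sq_sqrt h1
  have el2 : √l2 ^ 2 = l2 := Real.sq_sqrt h2
  have hs0 := Real.sqrt_nonneg r1
  have ht0 := Real.sqrt_nonneg r2
  have hl10 := Real.sqrt_nonneg l1
  have hl20 := Real.sqrt_nonneg l2
  have hSP1 : S P1 = a * r1 + b * (1 - √r1) ^ 2 := by
    rw [hS, hP1]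
    linear_combination a * es
  have hSP2 : S P2 = a * (1 - √r2) ^ 2 + b * r2 := by
    rw [hS, hP2]
    linear_combination b * et
  refine ⟨?_, ?_, ?_, by rw [hSP1, hSP2]⟩
  · rw [hK, hP1]
    refine ⟨⟨hs0, by linarith⟩, ⟨?_, ?_⟩, ⟨?_, ?_⟩, ?_, ?_⟩ <;> dsimp only <;> nlinarith
  · rw [hK, hP2]
    refine ⟨⟨?_, ?_⟩, ⟨ht0, by linarith⟩, ⟨?_, ?_⟩, ?_, ?_⟩ <;> dsimp only <;> nlinarith
  · rintro ⟨p, q⟩ hp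
    rw [hK] at hp
    obtain ⟨⟨hp0, hp1⟩, ⟨hq0, hq1⟩, ⟨-, hpr⟩, -, hqr⟩ := hp
    dsimp only at hp0 hp1 hq0 hq1 hpr hqr
    have key := sq_sum_le_max ha0 hb0 (Real.sqrt_nonneg _) (Real.sqrt_nonneg _)
      (Real.sqrt_le_sqrt hpr) (Real.sqrt_le_sqrt hqr)
      (by linarith [sqrt_mul_one_sub_le hp0 hq1, sqrt_mul_one_sub_le hq0 hp1])
    rw [Real.sq_sqrt (mul_nonneg hp0 (sub_nonneg.2 hq1)),
      Real.sq_sqrt (mul_nonneg hq0 (sub_nonneg.2 hp1)), es, et] at key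
    rw [hSP1, hSP2, hS]
    exact key
end
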